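/- Let p₁ ∈ ℤ with p₁ ≠ 0, let κ ∈ ℝ with κ ≥ |p₁|, and set p = (p₁, 0). For a = (a₁, a₂) ∈ ℤ² with a₂ ≠ 0, set ρ_k = 1/|p|_κ² − 1/|a + kp|_κ² and let M_a be the bounded linear operator on ℓ²(ℤ, ℂ) given by (M_a ω)_k = ρ_{k+1} ω_{k+1} − ρ_{k−1} ω_{k−1}. Then the spectrum of M_a is contained in the imaginary axis: every λ in the spectrum of M_a satisfies Re λ = 0. (Linear stability of the shear flow with vorticity 2Γcos(p₁x₁) on the domain [0,2π)×[0,2π/κ).) -/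

import Mathlib

/-!
Writing `U` for the bilateral shift and `P` for multiplication by `ρ`, the class operator is
`(U - U⋆) P`, a skew-adjoint operator times a diagonal one. On the domains with `κ ≥ |p₁|` every
mode of a class with `a₂ ≠ 0` satisfies `|a + kp|_κ ≥ |p|_κ`, so `P ≥ 0`. Moving a factor `√P`
around cyclically does not change the nonzero spectrum, so `(U - U⋆) P` has the nonzero spectrum
of the skew-adjoint operator `√P (U - U⋆) √P`.
-/

open scoped ENNReal lp InnerProductSpace

section CStarAlgebra

variable {A : Type*} [CStarAlgebra A] {z : ℂ}

theorem re_eq_zero_of_mem_spectrum_of_mem_skewAdjoint {a : A} (ha : a ∈ skewAdjoint A)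
    (hz : z ∈ spectrum ℂ a) : z.re = 0 := by
  have hIa : IsSelfAdjoint (Complex.I • a) :=
    isSelfAdjoint_smul_of_mem_skewAdjoint Complex.conj_I ha
  have hIz : Complex.I * z ∈ spectrum ℂ (Complex.I • a) :=
    (spectrum.smul_mem_smul_iff (r := Units.mk0 Complex.I Complex.I_ne_zero)).2 hz
  simpa only [Complex.I_mul_im] using hIa.im_eq_zero_of_mem_spectrum hIz

theorem re_eq_zero_of_mem_spectrum_skewAdjoint_mul_nonneg [PartialOrder A] [StarOrderedRing A]
    {a b : A} (ha : a ∈ skewAdjoint A) (hb : 0 ≤ b) (hz : z ∈ spectrum ℂ (a * b)) :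
    z.re = 0 := by
  rcases eq_or_ne z 0 with rfl | hz0
  · exact Complex.zero_re
  let s := CFC.sqrt b
  have hs : star s = s := (CFC.sqrt_nonneg b).isSelfAdjoint.star_eq
  have hfactor : a * b = a * s * s := by rw [mul_assoc, CFC.sqrt_mul_sqrt_self b]
  have hskew : s * (a * s) ∈ skewAdjoint A := by
    simpa only [hs, mul_assoc] using skewAdjoint.conjugate ha s
  have hcyclic : z ∈ spectrum ℂ (s * (a * s)) \ {0} := by
    rw [← spectrum.nonzero_mul_comm, ← hfactor]
    exact ⟨hz, hz0⟩
  exact re_eq_zero_of_mem_spectrum_of_mem_skewAdjoint hskew hcyclic.1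

end CStarAlgebra

theorem isPositive_lp_mapCLM {ι 𝕜 : Type*} [RCLike 𝕜] {G : ι → Type*}
    [∀ i, NormedAddCommGroup (G i)] [∀ i, InnerProductSpace 𝕜 (G i)]
    {T : ∀ i, G i →L[𝕜] G i} {K : ℝ} (hK : 0 ≤ K) (hTK : ∀ i, ‖T i‖ ≤ K)
    (hT : ∀ i, (T i).IsPositive) : (lp.mapCLM 2 T hK hTK).IsPositive := by
  refine ContinuousLinearMap.isPositive_def.2 ⟨fun x y => ?_, fun x => ?_⟩
  · calc ⟪lp.mapCLM 2 T hK hTK x, y⟫_𝕜 = ∑' i, ⟪T i (x i), y i⟫_𝕜 := lp.inner_eq_tsum _ _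
      _ = ∑' i, ⟪x i, T i (y i)⟫_𝕜 := tsum_congr fun i => (hT i).isSymmetric (x i) (y i)
      _ = ⟪x, lp.mapCLM 2 T hK hTK y⟫_𝕜 := (lp.inner_eq_tsum x (lp.mapCLM 2 T hK hTK y)).symm
  · have hsum := RCLike.hasSum_re 𝕜 (lp.hasSum_inner (lp.mapCLM 2 T hK hTK x) x)
    exact hsum.nonneg fun i => (hT i).re_inner_nonneg_left (x i)

section Reindexing

variable {ι κ E : Type*} [NormedAddCommGroup E] {p : ℝ≥0∞}

theorem memℓp_comp_injective {f : ι → E} (hf : Memℓp f p) {e : κ → ι}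
    (he : Function.Injective e) : Memℓp (fun k => f (e k)) p := by
  rcases p.trichotomy with rfl | rfl | hp
  · exact memℓp_zero (hf.finite_dsupport.preimage he.injOn)
  · rw [memℓp_infty_iff] at hf ⊢
    exact hf.mono (Set.range_comp_subset_range e fun i => ‖f i‖)
  · exact memℓp_gen ((hf.summable hp).comp_injective he)

/-- Reindexing of `ℓ^p` sequences along a bijection `e` of the index types, as a linear isometry;
the value of the image of `f` at `k` is `f (e.symm k)`. -/
noncomputable def lpReindex (𝕜 : Type*) [NormedField 𝕜] [NormedSpace 𝕜 E] (p : ℝ≥0∞)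
    [Fact (1 ≤ p)] (e : ι ≃ κ) : ℓ^p(ι, E) ≃ₗᵢ[𝕜] ℓ^p(κ, E) where
  toFun f := ⟨fun k => f (e.symm k), memℓp_comp_injective (lp.memℓp f) e.symm.injective⟩
  invFun f := ⟨fun i => f (e i), memℓp_comp_injective (lp.memℓp f) e.injective⟩
  left_inv f := lp.ext <| funext fun i => congrArg f (e.symm_apply_apply i)
  right_inv f := lp.ext <| funext fun k => congrArg f (e.apply_symm_apply k)
  map_add' _ _ := rfl
  map_smul' _ _ := rfl
  norm_map' f := by
    rcases p.dichotomy with rfl | hp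
    · exact e.symm.iSup_comp (g := fun i => ‖f i‖)
    · have hp0 : 0 < p.toReal := zero_lt_one.trans_le hp
      rw [lp.norm_eq_tsum_rpow hp0, lp.norm_eq_tsum_rpow hp0]
      exact congrArg (· ^ (1 / p.toReal)) (e.symm.tsum_eq fun i => ‖f i‖ ^ p.toReal)

end Reindexing

/-- The bilateral shift `(U ω)_k = ω_{k+1}` on `ℓ²(ℤ, ℂ)`. -/
noncomputable def bilateralShift : ℓ²(ℤ, ℂ) ≃ₗᵢ[ℂ] ℓ²(ℤ, ℂ) :=
  lpReindex ℂ 2 (Equiv.subRight 1)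

theorem abs_coefficient_le_opNorm {ρ : ℤ → ℝ} {M : ℓ²(ℤ, ℂ) →L[ℂ] ℓ²(ℤ, ℂ)}
    (hM : ∀ (ω : ℓ²(ℤ, ℂ)) (k : ℤ),
      (M ω) k = (ρ (k + 1) : ℂ) * ω (k + 1) - (ρ (k - 1) : ℂ) * ω (k - 1)) (j : ℤ) :
    |ρ j| ≤ ‖M‖ := by
  let e : ℓ²(ℤ, ℂ) := lp.single 2 j 1
  have he : ‖e‖ = 1 := by simp [e, lp.norm_single]
  have hcoord : (M e) (j - 1) = ρ j := by
    have hne : j - 1 - 1 ≠ j := by lia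
    simp [hM, e, hne]
  calc |ρ j| = ‖(M e) (j - 1)‖ := by rw [hcoord, Complex.norm_real, Real.norm_eq_abs]
    _ ≤ ‖M e‖ := lp.norm_apply_le_norm two_ne_zero _ _
    _ ≤ ‖M‖ := M.unit_le_opNorm e he.le

theorem shear_flow_class_operator_spectrum_imaginary_general
    {ρ : ℤ → ℝ} (hρ : ∀ k, 0 ≤ ρ k) {M : ℓ²(ℤ, ℂ) →L[ℂ] ℓ²(ℤ, ℂ)}
    (hM : ∀ (ω : ℓ²(ℤ, ℂ)) (k : ℤ),
      (M ω) k = (ρ (k + 1) : ℂ) * ω (k + 1) - (ρ (k - 1) : ℂ) * ω (k - 1)) :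
    ∀ z ∈ spectrum ℂ M, z.re = 0 := by
  let U : ℓ²(ℤ, ℂ) →L[ℂ] ℓ²(ℤ, ℂ) := bilateralShift
  let T : ℤ → ℂ →L[ℂ] ℂ := fun k => (ρ k : ℂ) • ContinuousLinearMap.id ℂ ℂ
  have hT : ∀ k, ‖T k‖ ≤ ‖M‖ := fun k => by
    simpa [T, norm_smul] using abs_coefficient_le_opNorm hM k
  let P := lp.mapCLM 2 T (norm_nonneg M) hT
  have hP : 0 ≤ P := by
    rw [ContinuousLinearMap.nonneg_iff_isPositive]
    exact isPositive_lp_mapCLM _ _ fun k =>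
      ContinuousLinearMap.isPositive_id.smul_of_nonneg (Complex.zero_le_real.2 (hρ k))
  have hskew : U - star U ∈ skewAdjoint (ℓ²(ℤ, ℂ) →L[ℂ] ℓ²(ℤ, ℂ)) := by
    rw [skewAdjoint.mem_iff, star_sub, star_star, neg_sub]
  have hfactor : M = (U - star U) * P := by
    have hstar : star U = bilateralShift.symm := bilateralShift.star_eq_symm
    rw [hstar]
    ext ω k
    calc (M ω) k = (ρ (k + 1) : ℂ) * ω (k + 1) - (ρ (k - 1) : ℂ) * ω (k - 1) := hM ω k
      _ = (P ω) (k + 1) - (P ω) (k - 1) := rfl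
      _ = (bilateralShift (P ω)) k - (bilateralShift.symm (P ω)) k := rfl
  intro z hz
  rw [hfactor] at hz
  exact re_eq_zero_of_mem_spectrum_skewAdjoint_mul_nonneg hskew hP hz

/-- The squared anisotropic norm `|v|_κ² = v₁² + κ² v₂²` of a wave vector. -/
def anisotropicNormSq (κ v₁ v₂ : ℝ) : ℝ := v₁ ^ 2 + κ ^ 2 * v₂ ^ 2

theorem anisotropicNormSq_horizontal_le {κ p : ℝ} (hκ : |p| ≤ κ) (x : ℝ) {n : ℤ} (hn : n ≠ 0) :
    anisotropicNormSq κ p 0 ≤ anisotropicNormSq κ x n := by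
  have hn1 : (1 : ℝ) ≤ (n : ℝ) ^ 2 := by
    exact_mod_cast (by positivity : 0 < n ^ 2)
  calc anisotropicNormSq κ p 0 = p ^ 2 := by simp [anisotropicNormSq]
    _ ≤ κ ^ 2 := sq_le_sq.2 (hκ.trans (le_abs_self κ))
    _ ≤ κ ^ 2 * n ^ 2 := le_mul_of_one_le_right (sq_nonneg κ) hn1
    _ ≤ anisotropicNormSq κ x n := le_add_of_nonneg_left (sq_nonneg x)

theorem one_div_anisotropicNormSq_sub_one_div_nonneg {κ p : ℝ} (hp : p ≠ 0) (hκ : |p| ≤ κ)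
    (x : ℝ) {n : ℤ} (hn : n ≠ 0) :
    0 ≤ 1 / anisotropicNormSq κ p 0 - 1 / anisotropicNormSq κ x n := by
  have hpos : 0 < anisotropicNormSq κ p 0 := by
    unfold anisotropicNormSq
    positivity
  exact sub_nonneg.2 (one_div_le_one_div_of_le hpos (anisotropicNormSq_horizontal_le hκ x hn))

/-- Linear stability of the shear flow with vorticity `2Γcos(p₁x₁)` on
`[0,2π) × [0,2π/κ)` with `κ ≥ |p₁|`: for any class `a = (a₁, a₂)` with
`a₂ ≠ 0`, the bounded operator `M_a` on `ℓ²(ℤ, ℂ)` given by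
`(M_a ω)_k = ρ_{k+1} ω_{k+1} - ρ_{k-1} ω_{k-1}`, where
`ρ_k = 1/|p|_κ² - 1/|a + kp|_κ²` and `p = (p₁, 0)`, has spectrum contained in
the imaginary axis. -/
theorem shear_flow_class_operator_spectrum_imaginary
    (p₁ : ℤ) (hp : p₁ ≠ 0) (κ : ℝ) (hκ : |(p₁ : ℝ)| ≤ κ)
    (a₁ a₂ : ℤ) (ha : a₂ ≠ 0)
    (ρ : ℤ → ℝ)
    (hρ : ∀ k : ℤ, ρ k = 1 / ((p₁ : ℝ) ^ 2 + κ ^ 2 * (0 : ℝ) ^ 2)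
        - 1 / (((a₁ + k * p₁ : ℤ) : ℝ) ^ 2 + κ ^ 2 * ((a₂ : ℤ) : ℝ) ^ 2))
    (M : lp (fun _ : ℤ => ℂ) 2 →L[ℂ] lp (fun _ : ℤ => ℂ) 2)
    (hM : ∀ (ω : lp (fun _ : ℤ => ℂ) 2) (k : ℤ),
      (M ω) k = (ρ (k + 1) : ℂ) * ω (k + 1) - (ρ (k - 1) : ℂ) * ω (k - 1)) :
    ∀ z ∈ spectrum ℂ M, z.re = 0 := by
  exact shear_flow_class_operator_spectrum_imaginary_general (fun k => hρ k ▸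
    one_div_anisotropicNormSq_sub_one_div_nonneg (Int.cast_ne_zero.2 hp) hκ _ ha) hM
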